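/- arXiv:2312.11906 — 2 statements merged into one kernel-verified Lean document; each statement's English description precedes it below -/
import Mathlib

section
/- In the Morel-relation setting with the additional relation [c]*[−c] = 0 for all c ∈ Aˣ, for every b ∈ Aˣ one has [b]*[−1] + ⟨−1⟩*[b]*[−1] = 0 in R. (Intermediate identity established in the proof of Corollary A.5 of the paper.) -/
/-!
Write `[a] = s a` and `⟨a⟩ = 1 + η[a]`. Expanding `[(-1)(-1)]` gives `[1] = 2[-1] + η[-1][-1]`.
Multiply this on the left by `[b]`: moving `η` past `[b]`, and then exchanging `[b]` and `[-1]`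
behind `η`, turns the right-hand side into `[b][-1] + ⟨-1⟩[b][-1]`, which is therefore `[b][1]`.
Morel's relation `η(2 + η[-1]) = 0` forces `[1] = 0`.
-/

section MorelSymbol

variable {M R : Type*} [Ring R] {η : R} {s : M → R}

theorem eta_mul_symbol_mul_symbol_comm [Mul M]
    (symbol_mul : ∀ a b : M, s (a * b) = s a + s b + η * s a * s b)
    {a b : M} (hab : Commute a b) :
    η * s a * s b = η * s b * s a := by
  have expand_both : s a + s b + η * s a * s b = s a + s b + η * s b * s a := by
    rw [← symbol_mul, hab.eq, symbol_mul, add_comm (s b)]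
  exact add_left_cancel expand_both

variable [MulOneClass M] [HasDistribNeg M]

theorem symbol_one_eq_symbol_neg_one_mul_self
    (symbol_mul : ∀ a b : M, s (a * b) = s a + s b + η * s a * s b) :
    s 1 = s (-1) + s (-1) + η * s (-1) * s (-1) := by
  rw [← symbol_mul, neg_one_mul, neg_neg]

theorem symbol_one_eq_zero
    (symbol_mul : ∀ a b : M, s (a * b) = s a + s b + η * s a * s b)
    (eta_hyperbolic : η * (2 + η * s (-1)) = 0) :
    s 1 = 0 := by
  have eta_mul_symbol_one : η * s 1 = 0 :=
    calc η * s 1 = η * (2 + η * s (-1)) * s (-1) := by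
          rw [symbol_one_eq_symbol_neg_one_mul_self symbol_mul]; noncomm_ring
      _ = 0 := by rw [eta_hyperbolic, zero_mul]
  have symbol_one_eq_double : s 1 = s 1 + s 1 := by
    simpa only [mul_one, eta_mul_symbol_one, zero_mul, add_zero] using symbol_mul 1 1
  exact left_eq_add.mp symbol_one_eq_double

theorem symbol_mul_symbol_neg_one_add_eq_symbol_mul_symbol_one
    (symbol_mul : ∀ a b : M, s (a * b) = s a + s b + η * s a * s b)
    {b : M} (eta_comm : Commute η (s b)) :
    s b * s (-1) + (1 + η * s (-1)) * (s b * s (-1)) = s b * s 1 := by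
  have swap : η * s (-1) * s b = η * s b * s (-1) :=
    eta_mul_symbol_mul_symbol_comm symbol_mul (Commute.neg_one_left b)
  calc s b * s (-1) + (1 + η * s (-1)) * (s b * s (-1))
      = s b * s (-1) + s b * s (-1) + η * s (-1) * s b * s (-1) := by noncomm_ring
    _ = s b * s (-1) + s b * s (-1) + s b * η * s (-1) * s (-1) := by rw [swap, eta_comm.eq]
    _ = s b * (s (-1) + s (-1) + η * s (-1) * s (-1)) := by noncomm_ring
    _ = s b * s 1 := by rw [symbol_one_eq_symbol_neg_one_mul_self symbol_mul]

theorem symbol_neg_one_rel_general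
    (symbol_mul : ∀ a b : M, s (a * b) = s a + s b + η * s a * s b)
    (eta_hyperbolic : η * (2 + η * s (-1)) = 0)
    {b : M} (eta_comm : Commute η (s b)) :
    s b * s (-1) + (1 + η * s (-1)) * (s b * s (-1)) = 0 := by
  rw [symbol_mul_symbol_neg_one_add_eq_symbol_mul_symbol_one symbol_mul eta_comm,
    symbol_one_eq_zero symbol_mul eta_hyperbolic, mul_zero]

end MorelSymbol

/-- Morel-relation setting with `[c]*[−c] = 0` for all units `c`:
`[b]*[−1] + ⟨−1⟩*[b]*[−1] = 0`. -/
theorem symbol_neg_one_rel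
    {A R : Type*} [CommRing A] [Ring R]
    (η : R) (s : Aˣ → R)
    (rel1 : ∀ a b : Aˣ, s (a * b) = s a + s b + η * s a * s b)
    (rel2 : ∀ a : Aˣ, η * s a = s a * η)
    (rel3 : η * (2 + η * s (-1)) = 0)
    (hsn : ∀ c : Aˣ, s c * s (-c) = 0) :
    ∀ b : Aˣ, s b * s (-1) + (1 + η * s (-1)) * (s b * s (-1)) = 0 :=
  fun b => symbol_neg_one_rel_general rel1 rel3 (rel2 b)
end

section
/- In the Morel-relation setting with the additional relation [c]*[−c] = 0 for all c ∈ Aˣ, for every a ∈ Aˣ and every integer m one has [a^m] = m_ε * [a] in R, where a^m denotes the m-th power of the unit a. (Algebraic form of Corollary A.6 of the paper, which establishes this identity in Hom_{SH(S;Λ)}(Λ, Λ(1)[1]).) -/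
/-- For `ε` in a ring `R` with `ε² = 1` and `m : ℤ`,
`m_ε = ⌈m/2⌉·1 + ⌊m/2⌋·ε`. -/
noncomputable def mEps {R : Type*} [Ring R] (ε : R) (m : ℤ) : R :=
  (⌈(m : ℚ) / 2⌉ : ℤ) • (1 : R) + (⌊(m : ℚ) / 2⌋ : ℤ) • ε

/-!
Since `[a * b] = [a] + ⟨a⟩[b]` and `⟨a⟩` is multiplicative, the symbol is a crossed homomorphism
for the action of units through `⟨·⟩`. Multiplying `[a][-a] = 0` by `η` gives `⟨a⟩[a] = ε[a]` with
`ε = ⟨-1⟩`, so `m ↦ [a ^ m]` satisfies the same recursion `x (m + 1) = [a] + ⟨a⟩ x m` as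
`m ↦ m_ε [a]`, by `(m + 1)_ε = 1 + ε m_ε`. The recursion also runs backwards because `⟨a⟩` is
invertible. The same argument works in any group, with an element `e` commuting with `a` and
satisfying `η ⟨e⟩ = -η` in the role of `-1`.
-/

section MEps

variable {R : Type*} [Ring R]

theorem mEps_eq_ediv (ε : R) (m : ℤ) : mEps ε m = ((m + 1) / 2) • (1 : R) + (m / 2) • ε := by
  have hfloor : ⌊(m : ℚ) / 2⌋ = m / 2 := by exact_mod_cast Rat.floor_intCast_div_natCast m 2
  have hceil : ⌈(m : ℚ) / 2⌉ = -(-m / 2) := by exact_mod_cast Rat.ceil_intCast_div_natCast m 2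
  rw [mEps, hfloor, hceil, show -(-m / 2) = (m + 1) / 2 by lia]

theorem mEps_zero (ε : R) : mEps ε 0 = 0 := by
  simp [mEps]

theorem mEps_add_one {ε : R} (hε : ε * ε = 1) (m : ℤ) : mEps ε (m + 1) = 1 + ε * mEps ε m := by
  have hhalf : (m + 1 + 1) / 2 = m / 2 + 1 := by lia
  rw [mEps_eq_ediv, mEps_eq_ediv, hhalf, mul_add, mul_smul_comm, mul_smul_comm, mul_one, hε]
  module

theorem commute_mEps_right {x ε : R} (h : Commute x ε) (m : ℤ) : Commute x (mEps ε m) :=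
  ((Commute.one_right x).smul_right _).add_right (h.smul_right _)

end MEps

/-- A function `s : G → R` on a group, written `a ↦ [a]`, satisfying the first two of Morel's
relations with respect to `η : R`. The relation involving `[-1]` is not included, so that `G` need
not have a distinguished element. -/
structure IsMorelSymbol {G R : Type*} [Group G] [Ring R] (η : R) (s : G → R) : Prop where
  map_mul (a b : G) : s (a * b) = s a + s b + η * s a * s b
  commute (a : G) : Commute η (s a)

/-- The element `⟨a⟩ = 1 + η[a]` attached to a symbol `s = [·]`; in Milnor–Witt K-theory it is the
class of the rank one quadratic form `a x²`. -/
def rankOneForm {G R : Type*} [Ring R] (η : R) (s : G → R) (a : G) : R :=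
  1 + η * s a

theorem mul_rankOneForm_eq_neg_iff {G R : Type*} [Ring R] {η : R} {s : G → R} {e : G} :
    η * rankOneForm η s e = -η ↔ η * (2 + η * s e) = 0 := by
  rw [eq_neg_iff_add_eq_zero, rankOneForm, ← mul_add_one, add_right_comm, one_add_one_eq_two]

namespace IsMorelSymbol

variable {G R : Type*} [Group G] [Ring R] {η : R} {s : G → R}

theorem map_mul_eq_add_rankOneForm_mul (hs : IsMorelSymbol η s) (a b : G) :
    s (a * b) = s a + rankOneForm η s a * s b := by
  rw [hs.map_mul, rankOneForm, add_mul, one_mul, add_assoc]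

theorem map_zpow_add_one (hs : IsMorelSymbol η s) (a : G) (m : ℤ) :
    s (a ^ (m + 1)) = s a + rankOneForm η s a * s (a ^ m) := by
  rw [add_comm, zpow_one_add, hs.map_mul_eq_add_rankOneForm_mul]

theorem rankOneForm_mul (hs : IsMorelSymbol η s) (a b : G) :
    rankOneForm η s (a * b) = rankOneForm η s a * rankOneForm η s b := by
  have hcomm : η * (η * s a * s b) = η * s a * (η * s b) := by
    rw [mul_assoc, mul_assoc, (hs.commute a).left_comm]
  simp only [rankOneForm, hs.map_mul, mul_add, add_mul, one_mul, mul_one, hcomm]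
  abel

theorem eta_mul_mul_comm (hs : IsMorelSymbol η s) {a b : G} (hab : Commute a b) :
    η * s a * s b = η * s b * s a := by
  have h : s a + s b + η * s a * s b = s a + s b + η * s b * s a := by
    rw [← hs.map_mul, hab.eq, hs.map_mul, add_comm (s b)]
  exact add_left_cancel h

theorem commute_rankOneForm (hs : IsMorelSymbol η s) {a b : G} (hab : Commute a b) :
    Commute (rankOneForm η s a) (s b) := by
  refine (Commute.one_left _).add_left ?_
  calc η * s a * s b = η * s b * s a := hs.eta_mul_mul_comm hab
    _ = s b * (η * s a) := by rw [(hs.commute b).eq, mul_assoc]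

theorem commute_rankOneForm_rankOneForm (hs : IsMorelSymbol η s) {a b : G} (hab : Commute a b) :
    Commute (rankOneForm η s a) (rankOneForm η s b) := by
  rw [Commute, SemiconjBy, ← hs.rankOneForm_mul, hab.eq, hs.rankOneForm_mul]

section Epsilon

variable {e : G}

theorem rankOneForm_mul_self (hs : IsMorelSymbol η s) (hη : η * rankOneForm η s e = -η) :
    rankOneForm η s e * rankOneForm η s e = 1 := by
  calc rankOneForm η s e * rankOneForm η s e
      = rankOneForm η s e + s e * (η * rankOneForm η s e) := by
        nth_rw 1 [rankOneForm]
        rw [add_mul, one_mul, (hs.commute e).eq, mul_assoc]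
    _ = 1 := by rw [hη, mul_neg, ← (hs.commute e).eq, rankOneForm, add_neg_cancel_right]

theorem map_one (hs : IsMorelSymbol η s) (hη : η * rankOneForm η s e = -η) : s 1 = 0 := by
  have h : rankOneForm η s e * s 1 = 0 := by
    simpa using hs.map_mul_eq_add_rankOneForm_mul e 1
  calc s 1 = rankOneForm η s e * (rankOneForm η s e * s 1) := by
        rw [← mul_assoc, hs.rankOneForm_mul_self hη, one_mul]
    _ = 0 := by rw [h, mul_zero]

theorem isUnit_rankOneForm (hs : IsMorelSymbol η s) (hη : η * rankOneForm η s e = -η) (a : G) :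
    IsUnit (rankOneForm η s a) := by
  have hone : rankOneForm η s 1 = 1 := by rw [rankOneForm, hs.map_one hη, mul_zero, add_zero]
  refine isUnit_iff_exists.2 ⟨rankOneForm η s a⁻¹, ?_, ?_⟩
  · rw [← hs.rankOneForm_mul, mul_inv_cancel, hone]
  · rw [← hs.rankOneForm_mul, inv_mul_cancel, hone]

variable {a : G}

theorem rankOneForm_mul_symbol_self (hs : IsMorelSymbol η s) (hη : η * rankOneForm η s e = -η)
    (hea : Commute e a) (ha : s a * s (e * a) = 0) :
    rankOneForm η s a * s a = rankOneForm η s e * s a := by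
  have hsum : s a * s e + rankOneForm η s e * (s a * s a) = 0 := by
    rw [← ha, hs.map_mul_eq_add_rankOneForm_mul, mul_add, ← mul_assoc, ← mul_assoc,
      (hs.commute_rankOneForm hea).eq]
  have hsq : η * s a * s a = η * s e * s a := by
    calc η * s a * s a = -(η * rankOneForm η s e * (s a * s a)) := by
          rw [hη, neg_mul, neg_neg, mul_assoc]
      _ = η * (s a * s e) := by rw [eq_neg_of_add_eq_zero_left hsum, mul_neg, mul_assoc]
      _ = η * s e * s a := by rw [← mul_assoc, hs.eta_mul_mul_comm hea.symm]
  rw [rankOneForm, rankOneForm, add_mul, add_mul, hsq]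

theorem mEps_add_one_mul (hs : IsMorelSymbol η s) (hη : η * rankOneForm η s e = -η)
    (hea : Commute e a) (ha : s a * s (e * a) = 0) (m : ℤ) :
    mEps (rankOneForm η s e) (m + 1) * s a =
      s a + rankOneForm η s a * (mEps (rankOneForm η s e) m * s a) := by
  have hcomm_a : Commute (rankOneForm η s a) (mEps (rankOneForm η s e) m) :=
    commute_mEps_right (hs.commute_rankOneForm_rankOneForm hea.symm) m
  have hcomm_e : Commute (rankOneForm η s e) (mEps (rankOneForm η s e) m) :=
    commute_mEps_right (Commute.refl _) m
  rw [mEps_add_one (hs.rankOneForm_mul_self hη), add_mul, one_mul, hcomm_e.eq, mul_assoc,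
    ← hs.rankOneForm_mul_symbol_self hη hea ha, ← mul_assoc, ← hcomm_a.eq, mul_assoc]

end Epsilon

end IsMorelSymbol

theorem symbol_zpow_general {G R : Type*} [Group G] [Ring R] {η : R} {s : G → R}
    (hs : IsMorelSymbol η s) {e a : G} (hη : η * (2 + η * s e) = 0) (hea : Commute e a)
    (ha : s a * s (e * a) = 0) (m : ℤ) :
    s (a ^ m) = mEps (1 + η * s e) m * s a := by
  change s (a ^ m) = mEps (rankOneForm η s e) m * s a
  rw [← mul_rankOneForm_eq_neg_iff] at hη
  have hstep (n : ℤ) : s (a ^ (n + 1)) = mEps (rankOneForm η s e) (n + 1) * s a ↔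
      s (a ^ n) = mEps (rankOneForm η s e) n * s a := by
    rw [hs.map_zpow_add_one, hs.mEps_add_one_mul hη hea ha, add_right_inj,
      (hs.isUnit_rankOneForm hη a).mul_right_inj]
  induction m with
  | zero => rw [zpow_zero, hs.map_one hη, mEps_zero, zero_mul]
  | succ n ih => exact (hstep n).2 ih
  | pred n ih => exact (hstep _).1 (by rwa [sub_add_cancel])

/-- Morel-relation setting with `[c]*[−c] = 0` for all units `c`:
`[a^m] = m_ε * [a]` for every integer `m`, with `ε = ⟨-1⟩`. -/
theorem symbol_zpow
    {A R : Type*} [CommRing A] [Ring R]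
    (η : R) (s : Aˣ → R)
    (rel1 : ∀ a b : Aˣ, s (a * b) = s a + s b + η * s a * s b)
    (rel2 : ∀ a : Aˣ, η * s a = s a * η)
    (rel3 : η * (2 + η * s (-1)) = 0)
    (hsn : ∀ c : Aˣ, s c * s (-c) = 0) :
    ∀ (a : Aˣ) (m : ℤ), s (a ^ m) = mEps (1 + η * s (-1)) m * s a := fun a =>
  symbol_zpow_general ⟨rel1, rel2⟩ rel3 (Commute.all _ _) (by rw [neg_one_mul, hsn])
end
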